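/- arXiv:2406.17341 — 2 statements merged into one kernel-verified Lean document; each statement's English description precedes it below -/
import Mathlib

section
/- Let P be an edge-deletion invariant predicate on simple graphs on a finite vertex type V, let Gt ≤ Ĝ be simple graphs on V with P(Gt), and let E_cand = (edges of Ĝ) \ (edges of Gt). Then for every subset S ⊆ E_cand: there exists a list l enumerating E_cand without repetition such that the projector with edge ordering l outputs Gt ∪ S, if and only if S is maximal feasible (S is feasible and no candidate edge outside S can be added to S keeping feasibility). In particular every projector output satisfies P, contains Gt, and is a subgraph of Ĝ. -/
open SimpleGraph

-- One step of the projector: insert the edge `e` into the current graph `G`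
-- iff the resulting graph satisfies `P`.
open Classical in
noncomputable def projStep {V : Type*} (P : SimpleGraph V → Prop)
    (G : SimpleGraph V) (e : Sym2 V) : SimpleGraph V :=
  if P (G ⊔ SimpleGraph.fromEdgeSet {e}) then G ⊔ SimpleGraph.fromEdgeSet {e} else G

/-- The projector with edge ordering `l`: starting from `Gt`, process the edges
of `l` in order, inserting an edge exactly when the graph obtained by inserting
it satisfies `P`. -/
noncomputable def projector {V : Type*} (P : SimpleGraph V → Prop)
    (Gt : SimpleGraph V) (l : List (Sym2 V)) : SimpleGraph V :=
  l.foldl (projStep P) Gt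

/-!
An edge rejected by the projector stays infeasible for the final output, because the current graph
only grows and `P` is antitone; this makes every output maximal. Conversely, if the edges of a
feasible `S` are processed first, antitonicity makes each of them accepted, so the projector reaches
`Gt ∪ S`; if `S` is maximal, the graph then never changes again.
-/

theorem exists_list_nodup_setOf_mem_eq {α : Type*} {s : Set α} (hs : s.Finite) :
    ∃ l : List α, l.Nodup ∧ {a | a ∈ l} = s :=
  ⟨hs.toFinset.toList, hs.toFinset.nodup_toList, by simp⟩

section Projector

variable {V : Type*} {P : SimpleGraph V → Prop} {G : SimpleGraph V} {e : Sym2 V}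
  {l : List (Sym2 V)} {E S : Set (Sym2 V)}

theorem sup_fromEdgeSet_insert :
    G ⊔ fromEdgeSet (insert e S) = G ⊔ fromEdgeSet {e} ⊔ fromEdgeSet S := by
  rw [Set.insert_eq, fromEdgeSet_union, sup_assoc]

theorem projStep_of_pos (h : P (G ⊔ fromEdgeSet {e})) :
    projStep P G e = G ⊔ fromEdgeSet {e} :=
  if_pos h

theorem projStep_of_neg (h : ¬ P (G ⊔ fromEdgeSet {e})) : projStep P G e = G :=
  if_neg h

theorem le_projStep : G ≤ projStep P G e := by
  by_cases h : P (G ⊔ fromEdgeSet {e})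
  · exact le_sup_left.trans_eq (projStep_of_pos h).symm
  · exact (projStep_of_neg h).ge

theorem projStep_le : projStep P G e ≤ G ⊔ fromEdgeSet {e} := by
  by_cases h : P (G ⊔ fromEdgeSet {e})
  · exact (projStep_of_pos h).le
  · exact (projStep_of_neg h).trans_le le_sup_left

theorem prop_projStep (hG : P G) : P (projStep P G e) := by
  by_cases h : P (G ⊔ fromEdgeSet {e})
  · rwa [projStep_of_pos h]
  · rwa [projStep_of_neg h]

theorem projector_cons : projector P G (e :: l) = projector P (projStep P G e) l :=
  rfl

theorem projector_append (l₁ l₂ : List (Sym2 V)) :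
    projector P G (l₁ ++ l₂) = projector P (projector P G l₁) l₂ :=
  List.foldl_append

theorem le_projector : G ≤ projector P G l := by
  induction l generalizing G with
  | nil => exact le_rfl
  | cons _ _ ih => exact le_projStep.trans ih

theorem projector_le : projector P G l ≤ G ⊔ fromEdgeSet {e | e ∈ l} := by
  induction l generalizing G with
  | nil => exact le_sup_left
  | cons e l ih =>
    calc projector P (projStep P G e) l
        ≤ projStep P G e ⊔ fromEdgeSet {e | e ∈ l} := ih
      _ ≤ G ⊔ fromEdgeSet {e} ⊔ fromEdgeSet {e | e ∈ l} := sup_le_sup_right projStep_le _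
      _ = G ⊔ fromEdgeSet {e' | e' ∈ e :: l} := by
        rw [List.setOfPred_mem_cons, sup_fromEdgeSet_insert]

theorem prop_projector (hG : P G) : P (projector P G l) := by
  induction l generalizing G with
  | nil => exact hG
  | cons _ _ ih => exact ih (prop_projStep hG)

theorem fromEdgeSet_singleton_le_projector (hP : Antitone P) (he : e ∈ l)
    (h : P (projector P G l ⊔ fromEdgeSet {e})) : fromEdgeSet {e} ≤ projector P G l := by
  obtain ⟨l₁, l₂, rfl⟩ := List.append_of_mem he
  rw [projector_append, projector_cons] at h ⊢
  have accepted : P (projector P G l₁ ⊔ fromEdgeSet {e}) :=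
    hP (sup_le_sup_right (le_projStep.trans le_projector) _) h
  calc fromEdgeSet {e} ≤ projector P G l₁ ⊔ fromEdgeSet {e} := le_sup_right
    _ = projStep P (projector P G l₁) e := (projStep_of_pos accepted).symm
    _ ≤ projector P (projStep P (projector P G l₁) e) l₂ := le_projector

theorem projector_eq_self (h : ∀ e ∈ l, ¬ P (G ⊔ fromEdgeSet {e})) : projector P G l = G := by
  induction l with
  | nil => rfl
  | cons e l ih =>
    rw [List.forall_mem_cons] at h
    rw [projector_cons, projStep_of_neg h.1, ih h.2]

theorem projector_eq_sup (hP : Antitone P) (h : P (G ⊔ fromEdgeSet {e | e ∈ l})) :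
    projector P G l = G ⊔ fromEdgeSet {e | e ∈ l} := by
  induction l generalizing G with
  | nil => simp [projector]
  | cons e l ih =>
    rw [List.setOfPred_mem_cons, sup_fromEdgeSet_insert] at h ⊢
    rw [projector_cons, projStep_of_pos (hP le_sup_left h), ih h]

/-- `S` is a maximal feasible set of candidate edges over `G`, where `E` is the set of candidates:
`G ∪ S` satisfies `P`, and adding any further single candidate violates `P`. The inclusion `S ⊆ E`
is not part of the definition. -/
def IsMaximalFeasible (P : SimpleGraph V → Prop) (G : SimpleGraph V) (E S : Set (Sym2 V)) : Prop :=
  P (G ⊔ fromEdgeSet S) ∧ ∀ e ∈ E \ S, ¬ P (G ⊔ fromEdgeSet (insert e S))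

theorem isMaximalFeasible_of_projector_eq (hP : Antitone P) (hG : P G)
    (hl : {e | e ∈ l} ⊆ Gᶜ.edgeSet) (hS : projector P G l = G ⊔ fromEdgeSet S) :
    IsMaximalFeasible P G {e | e ∈ l} S := by
  refine ⟨hS ▸ prop_projector hG, fun e ⟨hel, heS⟩ hPe => ?_⟩
  rw [sup_fromEdgeSet_insert, sup_right_comm, ← hS] at hPe
  have inserted : fromEdgeSet {e} ≤ G ⊔ fromEdgeSet S :=
    hS ▸ fromEdgeSet_singleton_le_projector hP hel hPe
  induction e with | _ v w
  obtain ⟨hne, not_adj⟩ : v ≠ w ∧ ¬ G.Adj v w := hl hel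
  have hadj : G.Adj v w ∨ s(v, w) ∈ S ∧ v ≠ w := inserted ⟨rfl, hne⟩
  exact hadj.elim not_adj fun h => heS h.1

theorem IsMaximalFeasible.exists_projector_eq (hS : IsMaximalFeasible P G E S) (hP : Antitone P)
    (hE : E.Finite) (hSE : S ⊆ E) :
    ∃ l : List (Sym2 V), l.Nodup ∧ {e | e ∈ l} = E ∧ projector P G l = G ⊔ fromEdgeSet S := by
  obtain ⟨accepted, accepted_nodup, rfl⟩ := exists_list_nodup_setOf_mem_eq (hE.subset hSE)
  obtain ⟨rejected, rejected_nodup, hrejected⟩ :=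
    exists_list_nodup_setOf_mem_eq (hE.sdiff (t := {e | e ∈ accepted}))
  have mem_rejected (e) : e ∈ rejected ↔ e ∈ E \ {e | e ∈ accepted} := Set.ext_iff.1 hrejected e
  refine ⟨accepted ++ rejected, ?_, ?_, ?_⟩
  · exact accepted_nodup.append rejected_nodup fun e he he' => ((mem_rejected e).1 he').2 he
  · calc {e | e ∈ accepted ++ rejected} = {e | e ∈ accepted} ∪ {e | e ∈ rejected} := by
          simp only [List.mem_append, Set.ofPred_or]
      _ = E := by rw [hrejected, Set.union_sdiff_cancel hSE]
  · rw [projector_append, projector_eq_sup hP hS.1]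
    refine projector_eq_self fun e he => ?_
    rw [sup_right_comm, ← sup_fromEdgeSet_insert]
    exact hS.2 e ((mem_rejected e).1 he)

theorem projector_output_iff_maximal_feasible_general (hP : Antitone P) {Gt Ghat : SimpleGraph V}
    (hfin : (Ghat.edgeSet \ Gt.edgeSet).Finite) (hle : Gt ≤ Ghat) (hGt : P Gt) :
    (∀ S ⊆ Ghat.edgeSet \ Gt.edgeSet,
      (∃ l : List (Sym2 V), l.Nodup ∧ (∀ e, e ∈ l ↔ e ∈ Ghat.edgeSet \ Gt.edgeSet) ∧
          projector P Gt l = Gt ⊔ fromEdgeSet S) ↔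
        IsMaximalFeasible P Gt (Ghat.edgeSet \ Gt.edgeSet) S) ∧
    (∀ l : List (Sym2 V), (∀ e ∈ l, e ∈ Ghat.edgeSet) →
      P (projector P Gt l) ∧ Gt ≤ projector P Gt l ∧ projector P Gt l ≤ Ghat) := by
  refine ⟨fun S hS => ⟨?_, fun h => ?_⟩, fun l hl => ⟨prop_projector hGt, le_projector, ?_⟩⟩
  · rintro ⟨l, -, hl, hout⟩
    have candidates : {e | e ∈ l} = Ghat.edgeSet \ Gt.edgeSet := Set.ext hl
    have candidates_compl : {e | e ∈ l} ⊆ Gtᶜ.edgeSet := by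
      rw [candidates, ← edgeSet_sdiff, edgeSet_subset_edgeSet, sdiff_eq]
      exact inf_le_right
    exact candidates ▸ isMaximalFeasible_of_projector_eq hP hGt candidates_compl hout
  · obtain ⟨l, hnodup, hl, hout⟩ := h.exists_projector_eq hP hfin hS
    exact ⟨l, hnodup, Set.ext_iff.1 hl, hout⟩
  · have processed_le : fromEdgeSet {e | e ∈ l} ≤ Ghat :=
      (fromEdgeSet_le _).2 fun e he => hl e he.1
    exact projector_le.trans (sup_le hle processed_le)

end Projector

/-- Characterization of projector outputs: for `S ⊆ E_cand`, the graph `Gt ∪ S`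
is the output of the projector for some enumeration of `E_cand` without
repetition iff `S` is maximal feasible. In particular, every projector output
satisfies `P`, contains `Gt`, and is a subgraph of `Ghat`. -/
theorem projector_output_iff_maximal_feasible {V : Type*} [Fintype V] [DecidableEq V]
    (P : SimpleGraph V → Prop)
    (hP : ∀ G G' : SimpleGraph V, P G → G' ≤ G → P G')
    (Gt Ghat : SimpleGraph V) (hle : Gt ≤ Ghat) (hGt : P Gt) :
    (∀ S : Set (Sym2 V), S ⊆ Ghat.edgeSet \ Gt.edgeSet →
      ((∃ l : List (Sym2 V), l.Nodup ∧
          (∀ e : Sym2 V, e ∈ l ↔ e ∈ Ghat.edgeSet \ Gt.edgeSet) ∧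
          projector P Gt l = Gt ⊔ SimpleGraph.fromEdgeSet S) ↔
        (P (Gt ⊔ SimpleGraph.fromEdgeSet S) ∧
          ∀ e ∈ (Ghat.edgeSet \ Gt.edgeSet) \ S,
            ¬ P (Gt ⊔ SimpleGraph.fromEdgeSet (insert e S))))) ∧
    (∀ l : List (Sym2 V), l.Nodup →
      (∀ e : Sym2 V, e ∈ l ↔ e ∈ Ghat.edgeSet \ Gt.edgeSet) →
      P (projector P Gt l) ∧ Gt ≤ projector P Gt l ∧ projector P Gt l ≤ Ghat) :=
  (projector_output_iff_maximal_feasible_general (fun _ _ hle hG => hP _ _ hG hle)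
    (Set.toFinite _) hle hGt).imp_right fun h l _ hl => h l fun e he => ((hl e).1 he).1
end

section
/- There exist a finite vertex type V, simple graphs Gt ≤ Ĝ on V with Gt of maximum degree at most 2, and two subsets S₁, S₂ of the candidate edge set E_cand = (edges of Ĝ) \ (edges of Gt), each maximal feasible for the property "every vertex has degree at most 2" (i.e., Gt ∪ Sᵢ has maximum degree at most 2 and no further candidate edge can be added keeping maximum degree at most 2), such that |S₁| ≠ |S₂|. (Counterexample from the paper's Figure 6 showing that Theorem 2's equal-cardinality conclusion fails for the maximum-degree constraint: e.g., Gt the star with edges ab, ac on vertices {a, b, c, d} and candidate edges {bc, bd, cd}, where {bc} and {bd, cd} are both maximal feasible.) -/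
open SimpleGraph

/-!
Let `Gt` be the path `b - a - c` and let `d` be an isolated vertex. Closing the path by the edge
`bc` gives a triangle and the isolated vertex `d`; closing it through `d` by the edges `bd`, `cd`
gives a 4-cycle. In both graphs at most one vertex has degree below 2, so no edge at all can be
added, although one candidate edge was used in the first case and two in the second.
-/

section Feasibility

variable {V : Type*}

/-- The property "every vertex of `G` has degree at most `k`", for graphs with finite neighbourhoods
(`ncard` counts an infinite one as `0`). -/
def HasDegreesLE (k : ℕ) (G : SimpleGraph V) : Prop :=
  ∀ w, (G.neighborSet w).ncard ≤ k

/-- `S` is a maximal feasible set for the graph property `P`: it consists of candidate edges, which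
are the edges of `Ghat` not in `Gt`, adding `S` to `Gt` yields a graph with `P`, and adding one
further candidate edge destroys `P`. For a `P` that is not edge-deletion invariant this is weaker
than inclusion-maximality. -/
structure IsMaximalFeasible_s13 (P : SimpleGraph V → Prop) (Gt Ghat : SimpleGraph V)
    (S : Set (Sym2 V)) : Prop where
  subset_candidates : S ⊆ Ghat.edgeSet \ Gt.edgeSet
  feasible : P (Gt ⊔ fromEdgeSet S)
  not_feasible_insert : ∀ e ∈ (Ghat.edgeSet \ Gt.edgeSet) \ S,
    ¬ P (Gt ⊔ fromEdgeSet (insert e S))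

theorem edgeSet_sup_fromEdgeSet_sdiff {G : SimpleGraph V} {C : Set (Sym2 V)}
    (hC : C ⊆ Gᶜ.edgeSet) : (G ⊔ fromEdgeSet C).edgeSet \ G.edgeSet = C := by
  ext e
  induction e with | _ u v
  have huv : s(u, v) ∈ C → u ≠ v ∧ ¬ G.Adj u v := fun h ↦ by simpa using hC h
  simp only [Set.mem_sdiff, mem_edgeSet, sup_adj, fromEdgeSet_adj]
  tauto

theorem ncard_neighborSet_lt_ncard_neighborSet {G H : SimpleGraph V} (hGH : G ≤ H) {u v : V}
    (hfin : (H.neighborSet u).Finite) (hG : ¬ G.Adj u v) (hH : H.Adj u v) :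
    (G.neighborSet u).ncard < (H.neighborSet u).ncard :=
  Set.ncard_lt_ncard ⟨fun _ h ↦ hGH h, fun h ↦ hG (h hH)⟩ hfin

variable [Finite V]

theorem not_hasDegreesLE_sup_fromEdgeSet_insert {k : ℕ} {G : SimpleGraph V} {S : Set (Sym2 V)}
    {u v : V} (huv : u ≠ v) (hG : ¬ G.Adj u v) (hS : s(u, v) ∉ S)
    (hu : k ≤ ((G ⊔ fromEdgeSet S).neighborSet u).ncard) :
    ¬ HasDegreesLE k (G ⊔ fromEdgeSet (insert s(u, v) S)) := by
  have hle : G ⊔ fromEdgeSet S ≤ G ⊔ fromEdgeSet (insert s(u, v) S) :=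
    sup_le_sup_left (fromEdgeSet_mono (Set.subset_insert _ _)) G
  have hlt := ncard_neighborSet_lt_ncard_neighborSet hle (u := u) (v := v)
    (Set.toFinite _) (by simp [hG, hS]) (by simp [huv])
  exact fun h ↦ (hu.trans_lt hlt).not_ge (h u)

theorem isMaximalFeasible_hasDegreesLE_of_subsingleton {k : ℕ} {Gt Ghat : SimpleGraph V}
    {S : Set (Sym2 V)} (hS : S ⊆ Ghat.edgeSet \ Gt.edgeSet)
    (hdeg : HasDegreesLE k (Gt ⊔ fromEdgeSet S))
    (hunsat : {w | ((Gt ⊔ fromEdgeSet S).neighborSet w).ncard < k}.Subsingleton) :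
    IsMaximalFeasible_s13 (HasDegreesLE k) Gt Ghat S where
  subset_candidates := hS
  feasible := hdeg
  not_feasible_insert e := by
    induction e with | _ u v
    rintro ⟨⟨hGhat, hGt⟩, heS⟩
    have huv : u ≠ v := Adj.ne hGhat
    by_cases hu : k ≤ ((Gt ⊔ fromEdgeSet S).neighborSet u).ncard
    · exact not_hasDegreesLE_sup_fromEdgeSet_insert huv hGt heS hu
    · have hv : k ≤ ((Gt ⊔ fromEdgeSet S).neighborSet v).ncard :=
        not_lt.1 fun hv ↦ huv (hunsat (not_le.1 hu) hv)
      rw [Sym2.eq_swap] at heS ⊢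
      exact not_hasDegreesLE_sup_fromEdgeSet_insert huv.symm (mt Adj.symm hGt) heS hv

end Feasibility

section Counterexample

/-- The base graph of the counterexample, the star with edges `ab` and `ac` (a cherry) next to the
isolated vertex `d`; the vertices `a`, `b`, `c`, `d` are encoded as `0`, `1`, `2`, `3`. -/
abbrev cherry : SimpleGraph (Fin 4) := fromEdgeSet {s(0, 1), s(0, 2)}

/-- The candidate edges `bc`, `bd`, `cd` of the counterexample. -/
abbrev cherryCandidates : Set (Sym2 (Fin 4)) := {s(1, 2), s(1, 3), s(2, 3)}

theorem edgeSet_cherry_sup_cherryCandidates_sdiff :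
    (cherry ⊔ fromEdgeSet cherryCandidates).edgeSet \ cherry.edgeSet = cherryCandidates :=
  edgeSet_sup_fromEdgeSet_sdiff <| by simp [Set.insert_subset_iff]

theorem ncard_neighborSet_cherry (w : Fin 4) :
    (cherry.neighborSet w).ncard = ![2, 1, 1, 0] w := by
  rw [Set.ncard_eq_toFinset_card']
  revert w
  decide

theorem ncard_neighborSet_cherry_sup_triangle (w : Fin 4) :
    ((cherry ⊔ fromEdgeSet {s(1, 2)}).neighborSet w).ncard = ![2, 2, 2, 0] w := by
  rw [Set.ncard_eq_toFinset_card']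
  revert w
  decide

theorem ncard_neighborSet_cherry_sup_fourCycle (w : Fin 4) :
    ((cherry ⊔ fromEdgeSet {s(1, 3), s(2, 3)}).neighborSet w).ncard = 2 := by
  rw [Set.ncard_eq_toFinset_card']
  revert w
  decide

theorem isMaximalFeasible_triangle :
    IsMaximalFeasible_s13 (HasDegreesLE 2) cherry (cherry ⊔ fromEdgeSet cherryCandidates)
      {s(1, 2)} := by
  refine isMaximalFeasible_hasDegreesLE_of_subsingleton ?_ ?_ ?_
  · rw [edgeSet_cherry_sup_cherryCandidates_sdiff]
    simp
  · simp only [HasDegreesLE, ncard_neighborSet_cherry_sup_triangle]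
    decide
  · simp only [Set.Subsingleton, Set.mem_ofPred_eq, ncard_neighborSet_cherry_sup_triangle]
    decide

theorem isMaximalFeasible_fourCycle :
    IsMaximalFeasible_s13 (HasDegreesLE 2) cherry (cherry ⊔ fromEdgeSet cherryCandidates)
      {s(1, 3), s(2, 3)} := by
  refine isMaximalFeasible_hasDegreesLE_of_subsingleton ?_ ?_ ?_
  · rw [edgeSet_cherry_sup_cherryCandidates_sdiff]
    exact Set.subset_insert _ _
  · exact fun w ↦ (ncard_neighborSet_cherry_sup_fourCycle w).le
  · exact fun w hw ↦ absurd hw (ncard_neighborSet_cherry_sup_fourCycle w).not_lt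

end Counterexample

/-- Counterexample (paper's Figure 6): for the edge-deletion invariant property
"every vertex has degree at most 2", there exist graphs `Gt ≤ Ghat` with `Gt`
of maximum degree at most 2 and two maximal feasible subsets of the candidate
edge set of different cardinalities, so the equal-cardinality conclusion of
Theorem 2 fails for the maximum-degree constraint. -/
theorem maxDegree_maximal_feasible_card_ne :
    ∃ (V : Type) (_ : Fintype V) (_ : DecidableEq V)
      (Gt Ghat : SimpleGraph V) (S₁ S₂ : Set (Sym2 V)),
      Gt ≤ Ghat ∧
      (∀ w : V, (Gt.neighborSet w).ncard ≤ 2) ∧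
      S₁ ⊆ Ghat.edgeSet \ Gt.edgeSet ∧
      (∀ w : V, ((Gt ⊔ SimpleGraph.fromEdgeSet S₁).neighborSet w).ncard ≤ 2) ∧
      (∀ e ∈ (Ghat.edgeSet \ Gt.edgeSet) \ S₁,
        ¬ ∀ w : V,
          ((Gt ⊔ SimpleGraph.fromEdgeSet (insert e S₁)).neighborSet w).ncard ≤ 2) ∧
      S₂ ⊆ Ghat.edgeSet \ Gt.edgeSet ∧
      (∀ w : V, ((Gt ⊔ SimpleGraph.fromEdgeSet S₂).neighborSet w).ncard ≤ 2) ∧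
      (∀ e ∈ (Ghat.edgeSet \ Gt.edgeSet) \ S₂,
        ¬ ∀ w : V,
          ((Gt ⊔ SimpleGraph.fromEdgeSet (insert e S₂)).neighborSet w).ncard ≤ 2) ∧
      S₁.ncard ≠ S₂.ncard := by
  obtain ⟨hsub₁, hfeas₁, hmax₁⟩ := isMaximalFeasible_triangle
  obtain ⟨hsub₂, hfeas₂, hmax₂⟩ := isMaximalFeasible_fourCycle
  have hstar : HasDegreesLE 2 cherry := by
    simp only [HasDegreesLE, ncard_neighborSet_cherry]
    decide
  have hcard : ({s(1, 2)} : Set (Sym2 (Fin 4))).ncard ≠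
      ({s(1, 3), s(2, 3)} : Set (Sym2 (Fin 4))).ncard := by
    rw [Set.ncard_singleton, Set.ncard_pair (by decide)]
    decide
  exact ⟨Fin 4, inferInstance, inferInstance, cherry, cherry ⊔ fromEdgeSet cherryCandidates, _, _,
    le_sup_left, hstar, hsub₁, hfeas₁, hmax₁, hsub₂, hfeas₂, hmax₂, hcard⟩
end
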